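/- Let d ≥ 2. There exist functions L₁, L₂ : ℕ → ℕ, depending only on d and with L₁(N) → ∞ as N → ∞, such that for every N ≥ 1 and every Schwarz symmetric u : ℤ^d → [0,∞) with a_N(u) > 0: V◇_{L₁(N)} ⊆ {x : u(x) ≥ a_N(u)} and {x : u(x) > a_{N+1}(u)} ⊆ V□_{L₂(N)}. -/

import Mathlib

open Filter Topology

noncomputable section

abbrev ZLat (d : ℕ) := Fin d → ℤ

def stdVec (d : ℕ) (i : Fin d) : Fin d → ℝ := fun j => if j = i then 1 else 0

/-- The set of directions E⃗ ⊆ ℝ^d. -/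
def Evec (d : ℕ) : Set (Fin d → ℝ) :=
  {e | (∃ i, e = stdVec d i) ∨
    (∃ i j : Fin d, i < j ∧ e = fun k => (stdVec d i k + stdVec d j k) / 2) ∨
    (∃ i j : Fin d, i < j ∧ e = fun k => (stdVec d i k - stdVec d j k) / 2)}

/-- A fixed enumeration of E⃗ (for d = 2 it is e₁, e₂, (e₁+e₂)/2, (e₁-e₂)/2). -/
def EvecList (d : ℕ) : List (Fin d → ℝ) :=
  ((List.finRange d).map (stdVec d)) ++
  ((List.finRange d).flatMap fun i => (List.finRange d).filterMap fun j =>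
    if i < j then some (fun k => (stdVec d i k + stdVec d j k) / 2) else none) ++
  ((List.finRange d).flatMap fun i => (List.finRange d).filterMap fun j =>
    if i < j then some (fun k => (stdVec d i k - stdVec d j k) / 2) else none)

/-- The n-th largest value of `u`, counted with multiplicity (1-indexed). -/
def nthLargest {α : Type*} (u : α → NNReal) (n : ℕ) : NNReal :=
  sSup {t | ∃ Ω : Finset α, Ω.card = n ∧ ∀ x ∈ Ω, t ≤ u x}

/-- The 1-indexed position of the point with doubled coordinate `m` in the
spiral order 0, 1, −1, 2, −2, … (for even m) resp. 1/2, −1/2, 3/2, −3/2, … (for odd m). -/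
def posIdx (m : ℤ) : ℕ := (if 0 < m then m else 1 - m).toNat

/-- `x` and `y` lie on a common line with direction `e`. -/
def sameLine {d : ℕ} (e : Fin d → ℝ) (x y : ZLat d) : Prop :=
  ∃ c : ℝ, (fun i => (x i : ℝ) - (y i : ℝ)) = c • e

/-- Twice the inner product ⟨e, x⟩, as an integer. -/
def pairing {d : ℕ} (e : Fin d → ℝ) (x : ZLat d) : ℤ :=
  ⌊2 * ∑ i, e i * (x i : ℝ)⌋

/-- One-step rearrangement `R_e`. -/
def stepR {d : ℕ} (e : Fin d → ℝ) (u : ZLat d → NNReal) : ZLat d → NNReal :=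
  fun x => nthLargest (fun y : {y : ZLat d // sameLine e x y} => u y.1) (posIdx (pairing e x))

/-- `R^k u` : k successive one-step rearrangements cycling through the fixed enumeration. -/
def iterR (d : ℕ) (u : ZLat d → NNReal) : ℕ → ZLat d → NNReal
  | 0 => u
  | k + 1 => stepR ((EvecList d).getD (k % (EvecList d).length) 0) (iterR d u k)

/-- The Schwarz rearrangement on ℤ^d : pointwise limit of `R^k u`. -/
def RZd (d : ℕ) (u : ZLat d → NNReal) : ZLat d → NNReal :=
  fun x => limUnder atTop fun k => iterR d u k x

def Admissible {α : Type*} (u : α → NNReal) : Prop :=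
  ∀ t : NNReal, 0 < t → {x | t < u x}.Finite

def Equimeasurable {α : Type*} (u v : α → NNReal) : Prop :=
  ∀ t : NNReal, 0 < t → Nonempty ({x | t < u x} ≃ {x | t < v x})

/-- Graph distance (ℓ¹ distance) on the lattice ℤ^d. -/
def latDist {d : ℕ} (x y : ZLat d) : ℕ := ∑ i, (x i - y i).natAbs

/-- The i-th standard basis vector of ℤ^d. -/
def latE {d : ℕ} (i : Fin d) : ZLat d := fun j => if j = i then 1 else 0

/-- ‖∇u‖_p^p : the p-Sobolev energy, summing over each edge {x, x+e_i} once. -/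
def gradEnergy (d : ℕ) (p : ℝ) (u : ZLat d → NNReal) : ENNReal :=
  ∑' (x : ZLat d) (i : Fin d), ENNReal.ofReal (|(u (x + latE i) : ℝ) - (u x : ℝ)| ^ p)

/-- ‖∇u‖_p. -/
def gradNorm (d : ℕ) (p : ℝ) (u : ZLat d → NNReal) : ENNReal :=
  gradEnergy d p u ^ (1 / p)

/-- Graph automorphism of the lattice graph ℤ^d. -/
def IsLatAuto {d : ℕ} (σ : ZLat d ≃ ZLat d) : Prop :=
  ∀ x y : ZLat d, latDist (σ x) (σ y) = 1 ↔ latDist x y = 1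

def Supermodular (G : NNReal → NNReal → NNReal) : Prop :=
  ∀ s t s₀ t₀ : NNReal, G (s + s₀) t + G s (t + t₀) ≤ G (s + s₀) (t + t₀) + G s t

def StrictlySupermodular (G : NNReal → NNReal → NNReal) : Prop :=
  ∀ s t s₀ t₀ : NNReal, 0 < s₀ → 0 < t₀ →
    G (s + s₀) t + G s (t + t₀) < G (s + s₀) (t + t₀) + G s t

/-- The values of `u` are strictly decreasing: a₁ > a₂ > a₃ > ⋯ . -/
def StrictRan {α : Type*} (u : α → NNReal) : Prop :=
  ∀ n : ℕ, 0 < n → nthLargest u (n + 1) < nthLargest u n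


def VdiaI (d : ℕ) (l : ℤ) : Set (ZLat d) := {y | (∑ i, (y i).natAbs : ℤ) ≤ l}

def VboxI (d : ℕ) (l : ℤ) : Set (ZLat d) := {y | ∀ i, |y i| ≤ l}

/-! ### Abstract one-step rearrangement of finite sets -/

lemma abs_step {X : Type*} (r : X → X → Prop) (hr : Equivalence r) (pos : X → ℕ)
    (hinj : ∀ x y, r x y → pos x = pos y → x = y) (φ : X → ℕ)
    (hφ : ∀ x y, r x y → pos x < pos y → φ x < φ y) (hφ0 : ∀ x, 0 < φ x)
    (A A' : Set X) (hA : A.Finite)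
    (hA' : ∀ x, x ∈ A' ↔ pos x < {y | y ∈ A ∧ r x y}.ncard) :
    ∃ hf : A'.Finite, (∑ x ∈ hf.toFinset, φ x ≤ ∑ x ∈ hA.toFinset, φ x) ∧
      (∑ x ∈ hf.toFinset, φ x = ∑ x ∈ hA.toFinset, φ x → A' = A) := by
  classical
  have key : ∀ x, x ∈ A' → ∃ z, z ∈ A ∧ r x z ∧
      pos z = Nat.nth (fun m => ∃ z ∈ A, r x z ∧ pos z = m) (pos x) ∧ pos x ≤ pos z := by
    intro x hx
    rw [hA'] at hx
    set p : ℕ → Prop := fun m => ∃ z ∈ A, r x z ∧ pos z = m with hp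
    have himg : {m | p m} = pos '' {y | y ∈ A ∧ r x y} := by
      ext m
      simp only [hp, Set.mem_setOf_eq, Set.mem_image]
      constructor
      · rintro ⟨z, h1, h2, h3⟩; exact ⟨z, ⟨h1, h2⟩, h3⟩
      · rintro ⟨z, ⟨h1, h2⟩, h3⟩; exact ⟨z, h1, h2, h3⟩
    have hcard : {m | p m}.ncard = {y | y ∈ A ∧ r x y}.ncard := by
      rw [himg]
      apply Set.ncard_image_of_injOn
      intro y hy z hz h
      exact hinj y z (hr.trans (hr.symm hy.2) hz.2) h
    have hlt : ∀ hf : (setOf p).Finite, pos x < hf.toFinset.card := by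
      intro hf
      rw [← Set.ncard_eq_toFinset_card (setOf p) hf]
      change pos x < {m | p m}.ncard
      rw [hcard]; exact hx
    obtain ⟨z, h1, h2, h3⟩ : p (Nat.nth p (pos x)) := Nat.nth_mem (pos x) hlt
    refine ⟨z, h1, h2, h3, ?_⟩
    rw [h3]
    exact Nat.le_nth hlt
  choose! g hgA hgr hgn hgp using key
  have hgi : Set.InjOn g A' := by
    intro x hx y hy h
    have hxy : r x y := hr.trans (hgr x hx) (h ▸ hr.symm (hgr y hy))
    apply hinj x y hxy
    have h1 := hgn x hx
    have h2 := hgn y hy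
    have hpp : (fun m => ∃ z ∈ A, r x z ∧ pos z = m) = (fun m => ∃ z ∈ A, r y z ∧ pos z = m) := by
      funext m
      apply propext
      constructor
      · rintro ⟨z, h1, h2, h3⟩; exact ⟨z, h1, hr.trans (hr.symm hxy) h2, h3⟩
      · rintro ⟨z, h1, h2, h3⟩; exact ⟨z, h1, hr.trans hxy h2, h3⟩
    have hcnt : ∀ x ∈ A', ∀ hf : (setOf (fun m => ∃ z ∈ A, r x z ∧ pos z = m)).Finite,
        pos x < hf.toFinset.card := by
      intro x hx hf
      rw [hA'] at hx
      rw [← Set.ncard_eq_toFinset_card _ hf]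
      refine lt_of_lt_of_eq hx ?_
      rw [← Set.ncard_image_of_injOn (f := pos) (s := {y | y ∈ A ∧ r x y})]
      · congr 1
        ext m
        simp only [Set.mem_setOf_eq, Set.mem_image]
        constructor
        · rintro ⟨z, ⟨h1, h2⟩, h3⟩; exact ⟨z, h1, h2, h3⟩
        · rintro ⟨z, h1, h2, h3⟩; exact ⟨z, ⟨h1, h2⟩, h3⟩
      · intro y hy z hz h
        exact hinj y z (hr.trans (hr.symm hy.2) hz.2) h
    have hfin : (setOf (fun m => ∃ z ∈ A, r x z ∧ pos z = m)).Finite := by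
      apply (hA.image pos).subset
      rintro m ⟨z, h1, h2, h3⟩
      exact ⟨z, h1, h3⟩
    have c1 := hcnt x hx hfin
    have c2 := hcnt y hy
    rw [← hpp] at c2
    have c2 := c2 hfin
    rw [← hpp, ← h, h1] at h2
    exact Nat.nth_injOn hfin c1 c2 h2
  have hfin : A'.Finite := by
    apply Set.Finite.of_finite_image _ hgi
    apply hA.subset
    rintro _ ⟨x, hx, rfl⟩
    exact hgA x hx
  have hle : ∀ x ∈ A', φ x ≤ φ (g x) ∧ (φ x = φ (g x) → g x = x) := by
    intro x hx
    rcases (hgp x hx).lt_or_eq with h | h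
    · have := hφ _ _ (hgr x hx) h
      exact ⟨this.le, fun h => absurd h this.ne⟩
    · have := hinj _ _ (hgr x hx) h
      rw [← this]; simp
  have hsub : hfin.toFinset.image g ⊆ hA.toFinset := by
    intro z hz
    simp only [Finset.mem_image, Set.Finite.mem_toFinset] at hz ⊢
    obtain ⟨x, hx, rfl⟩ := hz
    exact hgA x hx
  have hs1 : ∑ x ∈ hfin.toFinset, φ x ≤ ∑ x ∈ hfin.toFinset, φ (g x) :=
    Finset.sum_le_sum fun x hx => (hle x (by simpa using hx)).1
  have himg : ∑ x ∈ hfin.toFinset.image g, φ x = ∑ x ∈ hfin.toFinset, φ (g x) := by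
    apply Finset.sum_image
    simpa using hgi
  have hs2 : ∑ x ∈ hfin.toFinset, φ (g x) ≤ ∑ x ∈ hA.toFinset, φ x := by
    rw [← himg]
    exact Finset.sum_le_sum_of_subset hsub
  refine ⟨hfin, hs1.trans hs2, fun heq => ?_⟩
  have e1 : ∑ x ∈ hfin.toFinset, φ x = ∑ x ∈ hfin.toFinset, φ (g x) := by omega
  have e2 := (Finset.sum_eq_sum_iff_of_le
    (fun x hx => (hle x (by simpa using hx)).1)).1 e1
  have hgid : ∀ x ∈ A', g x = x := fun x hx => (hle x hx).2 (e2 x (by simpa using hx))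
  have hA'A : A' ⊆ A := fun x hx => by
    have := hgA x hx
    rwa [hgid x hx] at this
  apply Set.Subset.antisymm hA'A
  intro x hx
  by_contra hx'
  have : ∑ x ∈ hfin.toFinset, φ x < ∑ x ∈ hA.toFinset, φ x :=
    Finset.sum_lt_sum_of_subset (by simpa using hA'A) (i := x) (by simpa using hx)
      (by simpa using hx') (hφ0 x) (fun _ _ _ => Nat.zero_le _)
  omega

/-! ### The n-th largest value -/

lemma bdd_aux {α : Type*} (u : α → NNReal) (M : NNReal) (hM : ∀ x, u x ≤ M) (n : ℕ)
    (hn : 1 ≤ n) : M ∈ upperBounds {t | ∃ Ω : Finset α, Ω.card = n ∧ ∀ x ∈ Ω, t ≤ u x} := by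
  rintro t ⟨Ω, hc, h⟩
  obtain ⟨x, hx⟩ : Ω.Nonempty := Finset.card_pos.1 (by omega)
  exact (h x hx).trans (hM x)

lemma nthLargest_le {α : Type*} (u : α → NNReal) (M : NNReal) (hM : ∀ x, u x ≤ M) (n : ℕ)
    (hn : 1 ≤ n) : nthLargest u n ≤ M := csSup_le' (bdd_aux u M hM n hn)

lemma lt_nthLargest_iff {α : Type*} (u : α → NNReal) (M : NNReal) (hM : ∀ x, u x ≤ M) (n : ℕ)
    (hn : 1 ≤ n) (t : NNReal) :
    t < nthLargest u n ↔ ∃ Ω : Finset α, Ω.card = n ∧ ∀ x ∈ Ω, t < u x := by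
  constructor
  · intro h
    obtain ⟨s, ⟨Ω, hc, hs⟩, hts⟩ := exists_lt_of_lt_csSup' h
    exact ⟨Ω, hc, fun x hx => hts.trans_le (hs x hx)⟩
  · rintro ⟨Ω, hc, h⟩
    have hne : Ω.Nonempty := Finset.card_pos.1 (by omega)
    have h1 : t < Ω.inf' hne u := by
      rw [Finset.lt_inf'_iff]; exact h
    refine h1.trans_le (le_csSup ⟨M, bdd_aux u M hM n hn⟩ ⟨Ω, hc, fun x hx => ?_⟩)
    exact Finset.inf'_le u hx

lemma exists_bound {α : Type*} (u : α → NNReal) (hu : Admissible u) : ∃ M, ∀ x, u x ≤ M := by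
  have h := (hu 1 one_pos).image u
  obtain ⟨M, hM⟩ := h.bddAbove
  refine ⟨max M 1, fun x => ?_⟩
  by_cases hx : 1 < u x
  · exact le_max_of_le_left (hM ⟨x, hx, rfl⟩)
  · exact le_max_of_le_right (not_lt.1 hx)

lemma posIdx_pos (m : ℤ) : 1 ≤ posIdx m := by
  unfold posIdx; split_ifs <;> omega

/-! ### Directions -/

def wt (d : ℕ) (i : Fin d) : ℤ := d - i

def IsDir (d : ℕ) (e : Fin d → ℝ) (a : Fin d → ℤ) (g : ℤ) : Prop :=
  (∀ k, e k = (g : ℝ) / 2 * a k) ∧ (∃ i, a i = 1) ∧ g * ∑ k, a k * a k = 2 ∧ 0 < g ∧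
    0 < 2 * g * ∑ k, a k * wt d k ∧ 2 * g * ∑ k, a k * wt d k < 4 * d + 1

lemma sameLine_iff {d : ℕ} {e a g} (h : IsDir d e a g) (x y : ZLat d) :
    sameLine e x y ↔ ∃ s : ℤ, ∀ k, x k = y k + s * a k := by
  obtain ⟨he, ⟨i, hi⟩, -, hg, -⟩ := h
  constructor
  · rintro ⟨c, hc⟩
    refine ⟨x i - y i, fun k => ?_⟩
    have h1 := congrFun hc i
    have h2 := congrFun hc k
    simp only [Pi.smul_apply, smul_eq_mul, he, hi] at h1 h2
    have : (x k : ℝ) = y k + (x i - y i) * a k := by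
      rw [h1]; push_cast; linarith
    exact_mod_cast this
  · rintro ⟨s, hs⟩
    refine ⟨2 * s / g, ?_⟩
    funext k
    have : (g : ℝ) ≠ 0 := by exact_mod_cast hg.ne'
    simp only [Pi.smul_apply, smul_eq_mul, he, hs]
    push_cast
    field_simp
    ring

lemma pairing_eq {d : ℕ} {e a g} (h : IsDir d e a g) (x : ZLat d) :
    pairing e x = g * ∑ k, a k * x k := by
  unfold pairing
  have : 2 * ∑ i, e i * (x i : ℝ) = ((g * ∑ k, a k * x k : ℤ) : ℝ) := by
    push_cast
    rw [Finset.mul_sum, Finset.mul_sum]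
    refine Finset.sum_congr rfl fun k _ => ?_
    rw [h.1]; ring
  rw [this, Int.floor_intCast]

lemma sameLine_equiv {d : ℕ} (e : Fin d → ℝ) : Equivalence (sameLine (d := d) e) := by
  refine ⟨fun x => ⟨0, by funext i; simp⟩, ?_, ?_⟩
  · rintro x y ⟨c, hc⟩
    refine ⟨-c, ?_⟩
    funext i
    have := congrFun hc i
    simp only [Pi.smul_apply, smul_eq_mul] at this ⊢
    linarith
  · rintro x y z ⟨c, hc⟩ ⟨c', hc'⟩
    refine ⟨c + c', ?_⟩
    funext i
    have h1 := congrFun hc i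
    have h2 := congrFun hc' i
    simp only [Pi.smul_apply, smul_eq_mul] at h1 h2 ⊢
    linarith

def potZ (d : ℕ) (x : ZLat d) : ℤ := ∑ i, ((4 * d + 1) * x i - wt d i) ^ 2

def pot (d : ℕ) (x : ZLat d) : ℕ := (potZ d x).toNat + 1

lemma pairing_line {d : ℕ} {e a g} (h : IsDir d e a g) (x y : ZLat d) (s : ℤ)
    (hs : ∀ k, x k = y k + s * a k) : pairing e x = pairing e y + 2 * s := by
  rw [pairing_eq h, pairing_eq h]
  have : ∑ k, a k * x k = ∑ k, a k * y k + s * ∑ k, a k * a k := by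
    rw [Finset.mul_sum, ← Finset.sum_add_distrib]
    exact Finset.sum_congr rfl fun k _ => by rw [hs]; ring
  rw [this]
  linear_combination s * h.2.2.1

lemma potZ_diff {d : ℕ} {e a g} (h : IsDir d e a g) (x y : ZLat d) (s : ℤ)
    (hs : ∀ k, x k = y k + s * a k) :
    g * (potZ d x - potZ d y) = (4 * d + 1) * (s * ((4 * d + 1) * (pairing e x + pairing e y)
      - 2 * g * ∑ k, a k * wt d k)) := by
  have h1 : potZ d x - potZ d y = (4 * d + 1) * (s * ((4 * d + 1) *
      (∑ k, a k * x k + ∑ k, a k * y k) - 2 * ∑ k, a k * wt d k)) := by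
    unfold potZ
    rw [← Finset.sum_sub_distrib, ← Finset.sum_add_distrib, Finset.mul_sum, Finset.mul_sum,
      ← Finset.sum_sub_distrib, Finset.mul_sum, Finset.mul_sum]
    refine Finset.sum_congr rfl fun k _ => ?_
    rw [hs]; ring
  rw [h1, pairing_eq h, pairing_eq h]
  ring

lemma posIdx_quad (M w p q : ℤ) (hw : 0 < w) (hwM : w < M) (h : posIdx p < posIdx q) :
    0 < (q - p) * (M * (q + p) - w) := by
  unfold posIdx at h
  rcases lt_trichotomy p q with hpq | hpq | hpq
  · have : 1 ≤ q + p := by split_ifs at h <;> omega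
    apply mul_pos (by omega)
    nlinarith
  · subst hpq; omega
  · have : q + p ≤ 0 := by split_ifs at h <;> omega
    apply mul_pos_of_neg_of_neg (by omega)
    nlinarith

lemma pot_lt {d : ℕ} {e a g} (h : IsDir d e a g) (x y : ZLat d) (hl : sameLine e x y)
    (hp : posIdx (pairing e x) < posIdx (pairing e y)) : pot d x < pot d y := by
  obtain ⟨s, hs⟩ := (sameLine_iff h y x).1 ((sameLine_equiv e).symm hl)
  have h1 := potZ_diff h y x s hs
  have h2 := pairing_line h y x s hs
  have h3 := posIdx_quad (4 * d + 1) (2 * g * ∑ k, a k * wt d k) _ _ h.2.2.2.2.1 h.2.2.2.2.2 hp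
  have hg := h.2.2.2.1
  rw [show pairing e y - pairing e x = 2 * s by omega, mul_assoc] at h3
  have h4 : 0 < g * (potZ d y - potZ d x) := by
    rw [h1]
    apply mul_pos (by positivity)
    omega
  have h5 : 0 < potZ d y - potZ d x := pos_of_mul_pos_right h4 hg.le
  have h6 : 0 ≤ potZ d x := Finset.sum_nonneg fun i _ => sq_nonneg _
  unfold pot
  omega

lemma pos_inj {d : ℕ} {e a g} (h : IsDir d e a g) (x y : ZLat d) (hl : sameLine e x y)
    (hp : posIdx (pairing e x) = posIdx (pairing e y)) : x = y := by
  obtain ⟨s, hs⟩ := (sameLine_iff h x y).1 hl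
  have h2 := pairing_line h x y s hs
  have : s = 0 := by
    unfold posIdx at hp
    split_ifs at hp <;> omega
  funext k
  rw [hs, this]; simp

/-! ### One step -/

def RSet {d : ℕ} (e : Fin d → ℝ) (A : Set (ZLat d)) : Set (ZLat d) :=
  {x | posIdx (pairing e x) - 1 < {y | y ∈ A ∧ sameLine e x y}.ncard}

lemma stepR_level {d : ℕ} (e : Fin d → ℝ) (v : ZLat d → NNReal) (M : NNReal)
    (hM : ∀ x, v x ≤ M) (t : NNReal) (hfin : {x | t < v x}.Finite) :
    {x | t < stepR e v x} = RSet e {x | t < v x} := by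
  classical
  ext x
  have hp := posIdx_pos (pairing e x)
  simp only [RSet, Set.mem_setOf_eq]
  unfold stepR
  rw [lt_nthLargest_iff (fun y : {y : ZLat d // sameLine e x y} => v y.1) M (fun y => hM y.1) _ hp]
  have hfin' : {y | t < v y ∧ sameLine e x y}.Finite := hfin.subset fun y hy => hy.1
  constructor
  · rintro ⟨Ω, hc, h⟩
    have : (Ω.image Subtype.val).card = Ω.card :=
      Finset.card_image_of_injective _ Subtype.val_injective
    have h2 : (↑(Ω.image Subtype.val) : Set (ZLat d)) ⊆ {y | t < v y ∧ sameLine e x y} := by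
      intro y hy
      simp only [Finset.coe_image, Set.mem_image] at hy
      obtain ⟨z, hz, rfl⟩ := hy
      exact ⟨h z hz, z.2⟩
    have h3 := Set.ncard_le_ncard h2 hfin'
    rw [Set.ncard_coe_finset] at h3
    omega
  · intro h
    rw [Set.ncard_eq_toFinset_card _ hfin'] at h
    obtain ⟨T, hT, hTc⟩ := Finset.exists_subset_card_eq
      (show posIdx (pairing e x) ≤ hfin'.toFinset.card by omega)
    refine ⟨T.subtype (sameLine e x), ?_, ?_⟩
    · rw [Finset.card_subtype, Finset.filter_true_of_mem, hTc]
      intro y hy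
      have := hT hy
      simp only [Set.Finite.mem_toFinset, Set.mem_setOf_eq] at this
      exact this.2
    · intro y hy
      have := hT (Finset.mem_subtype.1 hy)
      simp only [Set.Finite.mem_toFinset, Set.mem_setOf_eq] at this
      exact this.1

lemma RSet_step {d : ℕ} {e a g} (h : IsDir d e a g) (A : Set (ZLat d)) (hA : A.Finite) :
    ∃ hf : (RSet e A).Finite, (∑ x ∈ hf.toFinset, pot d x ≤ ∑ x ∈ hA.toFinset, pot d x) ∧
      (∑ x ∈ hf.toFinset, pot d x = ∑ x ∈ hA.toFinset, pot d x → RSet e A = A) := by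
  refine abs_step (sameLine e) (sameLine_equiv e) (fun x => posIdx (pairing e x) - 1) ?_ (pot d)
    ?_ (fun x => Nat.succ_pos _) A _ hA (fun x => Iff.rfl)
  · intro x y hl hp
    have h1 := posIdx_pos (pairing e x)
    have h2 := posIdx_pos (pairing e y)
    exact pos_inj h x y hl (by omega)
  · intro x y hl hp
    exact pot_lt h x y hl (by omega)

lemma RSet_fixed {d : ℕ} (e : Fin d → ℝ) (A : Set (ZLat d)) (hA : RSet e A = A) (x y : ZLat d)
    (hl : sameLine e x y) (hp : posIdx (pairing e y) ≤ posIdx (pairing e x)) (hx : x ∈ A) :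
    y ∈ A := by
  rw [← hA] at hx ⊢
  have : {z | z ∈ A ∧ sameLine e y z} = {z | z ∈ A ∧ sameLine e x z} := by
    ext z
    have E := sameLine_equiv e
    exact ⟨fun h => ⟨h.1, E.trans hl h.2⟩, fun h => ⟨h.1, E.trans (E.symm hl) h.2⟩⟩
  simp only [RSet, Set.mem_setOf_eq] at hx ⊢
  rw [this]
  omega

/-! ### The list of directions -/

lemma sum_latE {d : ℕ} (i : Fin d) (f : Fin d → ℤ) : ∑ k, latE i k * f k = f i := by
  simp [latE]

lemma isDir_std (d : ℕ) (i : Fin d) : IsDir d (stdVec d i) (latE i) 2 := by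
  have := i.2
  refine ⟨fun k => ?_, ⟨i, by simp [latE]⟩, ?_, by norm_num, ?_, ?_⟩
  · unfold stdVec latE; split_ifs <;> simp
  · rw [sum_latE]; simp [latE]
  · rw [sum_latE]; unfold wt; omega
  · rw [sum_latE]; unfold wt; omega

lemma isDir_plus (d : ℕ) (i j : Fin d) (hij : i < j) :
    IsDir d (fun k => (stdVec d i k + stdVec d j k) / 2) (fun k => latE i k + latE j k) 1 := by
  have := i.2
  have := j.2
  have h : (i : ℕ) < j := hij
  refine ⟨fun k => ?_, ⟨i, by simp [latE, hij.ne]⟩, ?_, by norm_num, ?_, ?_⟩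
  · unfold stdVec latE; push_cast; ring
  · simp only [add_mul, Finset.sum_add_distrib, sum_latE]; simp [latE, hij.ne, hij.ne']
  · simp only [add_mul, Finset.sum_add_distrib, sum_latE]; unfold wt; omega
  · simp only [add_mul, Finset.sum_add_distrib, sum_latE]; unfold wt; omega

lemma isDir_minus (d : ℕ) (i j : Fin d) (hij : i < j) :
    IsDir d (fun k => (stdVec d i k - stdVec d j k) / 2) (fun k => latE i k - latE j k) 1 := by
  have := i.2
  have := j.2
  have h : (i : ℕ) < j := hij
  refine ⟨fun k => ?_, ⟨i, by simp [latE, hij.ne]⟩, ?_, by norm_num, ?_, ?_⟩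
  · unfold stdVec latE; push_cast; ring
  · simp only [sub_mul, Finset.sum_sub_distrib, sum_latE]; simp [latE, hij.ne, hij.ne']
  · simp only [sub_mul, Finset.sum_sub_distrib, sum_latE]; unfold wt; omega
  · simp only [sub_mul, Finset.sum_sub_distrib, sum_latE]; unfold wt; omega

lemma mem_EvecList (d : ℕ) (e : Fin d → ℝ) : e ∈ EvecList d ↔ e ∈ Evec d := by
  simp only [EvecList, Evec, List.mem_append, List.mem_map, List.mem_flatMap, List.mem_filterMap,
    List.mem_finRange, true_and, Set.mem_setOf_eq, Option.ite_none_right_eq_some,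
    Option.some.injEq, eq_comm (b := e), or_assoc]

lemma isDir_of_mem (d : ℕ) (e : Fin d → ℝ) (he : e ∈ EvecList d) : ∃ a g, IsDir d e a g := by
  rw [mem_EvecList] at he
  rcases he with ⟨i, rfl⟩ | ⟨i, j, hij, rfl⟩ | ⟨i, j, hij, rfl⟩
  · exact ⟨_, _, isDir_std d i⟩
  · exact ⟨_, _, isDir_plus d i j hij⟩
  · exact ⟨_, _, isDir_minus d i j hij⟩

/-! ### Convergence -/

lemma getD_mem (d : ℕ) (hd : 2 ≤ d) (k : ℕ) :
    (EvecList d).getD (k % (EvecList d).length) 0 ∈ EvecList d := by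
  have hpos : 0 < (EvecList d).length :=
    List.length_pos_of_mem ((mem_EvecList d _).2 (Or.inl ⟨⟨0, by omega⟩, rfl⟩))
  rw [List.getD_eq_getElem _ _ (Nat.mod_lt _ hpos)]
  exact List.getElem_mem _

lemma iterR_le (d : ℕ) (u : ZLat d → NNReal) (M : NNReal) (hM : ∀ x, u x ≤ M) (k : ℕ) :
    ∀ x, iterR d u k x ≤ M := by
  induction k with
  | zero => exact hM
  | succ k ih =>
    intro x
    unfold iterR stepR
    exact nthLargest_le (fun y : {y : ZLat d // sameLine _ x y} => iterR d u k y.1) M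
      (fun y => ih y.1) _ (posIdx_pos _)

lemma level_stable (d : ℕ) (hd : 2 ≤ d) (u : ZLat d → NNReal) (hu : Admissible u)
    (t : NNReal) (ht : 0 < t) :
    ∃ (A : Set (ZLat d)), (∀ᶠ k in atTop, {x | t < iterR d u k x} = A) ∧
      ∀ e ∈ EvecList d, RSet e A = A := by
  obtain ⟨M, hM⟩ := exists_bound u hu
  set E : ℕ → (Fin d → ℝ) := fun k => (EvecList d).getD (k % (EvecList d).length) 0 with hE
  have hfin : ∀ k, {x | t < iterR d u k x}.Finite := by
    intro k
    induction k with
    | zero => exact hu t ht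
    | succ k ih =>
      have h1 := stepR_level (E k) (iterR d u k) M (iterR_le d u M hM k) t ih
      obtain ⟨a, g, hdir⟩ := isDir_of_mem d _ (getD_mem d hd k)
      obtain ⟨hf, -⟩ := RSet_step hdir _ ih
      change {x | t < stepR (E k) (iterR d u k) x}.Finite
      rw [h1]; exact hf
  have hlev : ∀ k, {x | t < iterR d u (k + 1) x} = RSet (E k) {x | t < iterR d u k x} :=
    fun k => stepR_level (E k) (iterR d u k) M (iterR_le d u M hM k) t (hfin k)
  set P : ℕ → ℕ := fun k => ∑ x ∈ (hfin k).toFinset, pot d x with hP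
  have hstep : ∀ k, P (k + 1) ≤ P k ∧ (P (k + 1) = P k →
      RSet (E k) {x | t < iterR d u k x} = {x | t < iterR d u k x}) := by
    intro k
    obtain ⟨a, g, hdir⟩ := isDir_of_mem d _ (getD_mem d hd k)
    obtain ⟨hf, h1, h2⟩ := RSet_step hdir _ (hfin k)
    have : P (k + 1) = ∑ x ∈ hf.toFinset, pot d x := by
      refine Finset.sum_congr ?_ fun _ _ => rfl
      ext x
      rw [Set.Finite.mem_toFinset, Set.Finite.mem_toFinset, hlev k]
    rw [this]
    exact ⟨h1, h2⟩
  have hanti : Antitone P := antitone_nat_of_succ_le fun k => (hstep k).1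
  obtain ⟨K, hK⟩ : ∃ K, ∀ k ≥ K, P K ≤ P k := by
    exact ⟨Function.argmin P, fun k _ => Function.argmin_le P k⟩
  have hfix : ∀ k ≥ K, RSet (E k) {x | t < iterR d u k x} = {x | t < iterR d u k x} := by
    intro k hk
    apply (hstep k).2
    have h1 := hK (k + 1) (by omega)
    have h2 := hanti hk
    have h3 := (hstep k).1
    omega
  have hconst : ∀ k ≥ K, {x | t < iterR d u k x} = {x | t < iterR d u K x} := by
    intro k hk
    induction k, hk using Nat.le_induction with
    | base => rfl
    | succ k hk ih => rw [hlev, hfix k hk, ih]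
  refine ⟨_, eventually_atTop.2 ⟨K, hconst⟩, fun e he => ?_⟩
  obtain ⟨n, hn, rfl⟩ := List.getElem_of_mem he
  have hk : K ≤ n + (EvecList d).length * K := by nlinarith
  have := hfix _ hk
  rw [hconst _ hk] at this
  have hE' : E (n + (EvecList d).length * K) = (EvecList d)[n] := by
    simp only [hE, Nat.add_mul_mod_self_left, Nat.mod_eq_of_lt hn]
    exact List.getD_eq_getElem _ _ hn
  rwa [hE'] at this

lemma iterR_tendsto (d : ℕ) (hd : 2 ≤ d) (u : ZLat d → NNReal) (hu : Admissible u)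
    (x : ZLat d) : ∃ c, Tendsto (fun k => iterR d u k x) atTop (𝓝 c) := by
  obtain ⟨M, hM⟩ := exists_bound u hu
  refine tendsto_of_no_upcrossings (s := Set.univ) dense_univ ?_ ?_ ?_
  · rintro a - b - hab ⟨h1, h2⟩
    obtain ⟨A, hA, -⟩ := level_stable d hd u hu b (lt_of_le_of_lt (zero_le) hab)
    obtain ⟨k, hk1, hk2⟩ := (h1.and_eventually hA).exists
    obtain ⟨l, hl1, hl2⟩ := (h2.and_eventually hA).exists
    have : x ∈ {x | b < iterR d u l x} := hl1
    rw [hl2, ← hk2] at this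
    exact absurd (hk1.trans hab) (not_lt.2 (le_of_lt this))
  · exact ⟨M, Filter.eventually_map.2 (Eventually.of_forall fun k => iterR_le d u M hM k x)⟩
  · exact ⟨0, Filter.eventually_map.2 (Eventually.of_forall fun k => zero_le)⟩

lemma schwarz_mono (d : ℕ) (hd : 2 ≤ d) (u : ZLat d → NNReal) (hu : Admissible u)
    (hfix : RZd d u = u) (e : Fin d → ℝ) (he : e ∈ EvecList d) (x y : ZLat d)
    (hl : sameLine e x y) (hp : posIdx (pairing e y) ≤ posIdx (pairing e x)) : u x ≤ u y := by
  have hlim : ∀ x, Tendsto (fun k => iterR d u k x) atTop (𝓝 (u x)) := by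
    intro x
    obtain ⟨c, hc⟩ := iterR_tendsto d hd u hu x
    have h1 : RZd d u x = c := hc.limUnder_eq
    rw [hfix] at h1
    rwa [h1]
  by_contra! hlt
  obtain ⟨t, ht1, ht2⟩ := exists_between hlt
  obtain ⟨A, hA, hst⟩ := level_stable d hd u hu t (lt_of_le_of_lt (zero_le) ht1)
  obtain ⟨k, ⟨hk1, hk2⟩, hk3⟩ := (((hlim x).eventually (lt_mem_nhds ht2)).and
    ((hlim y).eventually (gt_mem_nhds ht1)) |>.and hA).exists
  have hx : x ∈ A := by rw [← hk3]; exact hk1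
  have hy := RSet_fixed e A (hst e he) x y hl hp hx
  rw [← hk3] at hy
  exact absurd hk2 (not_lt.2 (le_of_lt hy))

/-! ### Geometry -/

def Stable {d : ℕ} (B : Set (ZLat d)) : Prop :=
  ∀ e ∈ EvecList d, ∀ x y : ZLat d, sameLine e x y →
    posIdx (pairing e y) ≤ posIdx (pairing e x) → x ∈ B → y ∈ B

lemma posIdx_le_of_abs {p q : ℤ} (h : |p| < |q|) : posIdx p ≤ posIdx q := by
  unfold posIdx
  rcases abs_cases p with h1 | h1 <;> rcases abs_cases q with h2 | h2 <;> split_ifs <;> omega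

lemma stable_dir {d : ℕ} {B : Set (ZLat d)} (hB : Stable B) {e a g} (he : e ∈ EvecList d)
    (h : IsDir d e a g) (x y : ZLat d) (s : ℤ) (hs : ∀ k, y k = x k + s * a k)
    (hp : |g * ∑ k, a k * y k| < |g * ∑ k, a k * x k|) (hx : x ∈ B) : y ∈ B := by
  rw [← pairing_eq h, ← pairing_eq h] at hp
  refine hB e he x y ?_ (posIdx_le_of_abs hp) hx
  exact (sameLine_equiv e).symm ((sameLine_iff h y x).2 ⟨s, hs⟩)

lemma stable_std {d : ℕ} {B : Set (ZLat d)} (hB : Stable B) (i : Fin d) (x : ZLat d) (c : ℤ)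
    (hc : |c| < |x i|) (hx : x ∈ B) : Function.update x i c ∈ B := by
  refine stable_dir hB ((mem_EvecList d _).2 (Or.inl ⟨i, rfl⟩)) (isDir_std d i) x _ (c - x i)
    ?_ ?_ hx
  · intro k
    by_cases hk : k = i
    · subst hk; simp [latE]
    · simp [latE, hk]
  · rw [sum_latE, sum_latE]
    simp only [Function.update_self, abs_mul]
    have : (0 : ℤ) < |2| := by norm_num
    nlinarith

lemma stable_plus {d : ℕ} {B : Set (ZLat d)} (hB : Stable B) (i j : Fin d) (hij : i ≠ j)
    (x y : ZLat d) (s : ℤ) (hi : y i = x i + s) (hj : y j = x j + s)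
    (hk : ∀ k, k ≠ i → k ≠ j → y k = x k) (hp : |y i + y j| < |x i + x j|) (hx : x ∈ B) :
    y ∈ B := by
  wlog h : i < j generalizing i j
  · exact this j i hij.symm hj hi (fun k h1 h2 => hk k h2 h1)
      (by rwa [add_comm, add_comm (x j)]) (lt_of_le_of_ne (not_lt.1 h) hij.symm)
  refine stable_dir hB ((mem_EvecList d _).2 (Or.inr (Or.inl ⟨i, j, h, rfl⟩)))
    (isDir_plus d i j h) x y s ?_ ?_ hx
  · intro k
    by_cases h1 : k = i
    · subst h1; simp [latE, hij, hi]
    · by_cases h2 : k = j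
      · subst h2; simp [latE, hij.symm, hj]
      · simp [latE, h1, h2, hk k h1 h2]
  · simpa only [add_mul, Finset.sum_add_distrib, sum_latE, one_mul] using hp

lemma stable_minus {d : ℕ} {B : Set (ZLat d)} (hB : Stable B) (i j : Fin d) (hij : i ≠ j)
    (x y : ZLat d) (s : ℤ) (hi : y i = x i + s) (hj : y j = x j - s)
    (hk : ∀ k, k ≠ i → k ≠ j → y k = x k) (hp : |y i - y j| < |x i - x j|) (hx : x ∈ B) :
    y ∈ B := by
  wlog h : i < j generalizing i j s
  · exact this j i hij.symm (-s) (by rw [hj]; ring) (by rw [hi]; ring)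
      (fun k h1 h2 => hk k h2 h1)
      (by rwa [abs_sub_comm, abs_sub_comm (x j)]) (lt_of_le_of_ne (not_lt.1 h) hij.symm)
  refine stable_dir hB ((mem_EvecList d _).2 (Or.inr (Or.inr ⟨i, j, h, rfl⟩)))
    (isDir_minus d i j h) x y s ?_ ?_ hx
  · intro k
    by_cases h1 : k = i
    · subst h1; simp [latE, hij, hi]
    · by_cases h2 : k = j
      · subst h2; simp [latE, hij.symm, hj]; ring
      · simp [latE, h1, h2, hk k h1 h2]
  · simpa only [sub_mul, Finset.sum_sub_distrib, sum_latE, one_mul] using hp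

lemma stable_zero {d : ℕ} {B : Set (ZLat d)} (hB : Stable B) (x : ZLat d) (hx : x ∈ B)
    (S : Finset (Fin d)) : (fun k => if k ∈ S then 0 else x k) ∈ B := by
  classical
  induction S using Finset.induction_on with
  | empty => simpa using hx
  | insert i S hi ih =>
    by_cases h0 : x i = 0
    · convert ih using 2 with k
      by_cases hk : k = i
      · subst hk; simp [h0]
      · simp [hk]
    · have := stable_std hB i _ 0 (by simpa [hi] using h0) ih
      convert this using 1
      funext k
      by_cases hk : k = i
      · subst hk; simp
      · simp [hk]

/-- Transfer mass from coordinate `i` to the coordinates in `S`. -/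
lemma stable_fill {d : ℕ} {B : Set (ZLat d)} (hB : Stable B) (i : Fin d) (c σ : ℤ)
    (hσ : σ = 1 ∨ σ = -1) (hx : (fun k => if k = i then σ * c else 0) ∈ B) (y : ZLat d)
    (S : Finset (Fin d)) (hiS : i ∉ S) (hc : ∑ j ∈ S, |y j| < c) :
    (fun k => if k = i then σ * (c - ∑ j ∈ S, |y j|) else if k ∈ S then y k else 0) ∈ B := by
  classical
  induction S using Finset.induction_on with
  | empty => simpa using hx
  | insert j S hj ih =>
    rw [Finset.sum_insert hj] at hc
    have hij : i ≠ j := fun h => hiS (by simp [h])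
    have hiS' : i ∉ S := fun h => hiS (by simp [h])
    have hnn := abs_nonneg (y j)
    have ih := ih hiS' (by omega)
    rw [Finset.sum_insert hj]
    set m := c - ∑ j ∈ S, |y j| with hm
    have hm' : c - (|y j| + ∑ j ∈ S, |y j|) = m - |y j| := by omega
    have hlt : |y j| < m := by omega
    rw [hm']
    by_cases h0 : y j = 0
    · convert ih using 2 with k
      by_cases hk : k = j
      · subst hk; simp [h0, hj, hij.symm]
      · simp [hk, h0]
    · have hpos : 0 < |y j| := abs_pos.2 h0
      have hrest : ∀ k, k ≠ i → k ≠ j → (if k = i then σ * (m - |y j|) else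
          if k ∈ insert j S then y k else 0) = (if k = i then σ * m else if k ∈ S then y k else 0) := by
        intro k h1 h2
        simp [h1, h2]
      by_cases hs : y j = -σ * |y j|
      · refine stable_plus hB i j hij _ _ (y j) ?_ ?_ hrest ?_ ih
        · simp only [if_true]; linear_combination hs * (-1)
        · simp [hij.symm, hj]
        · simp only [if_true, if_neg hij.symm, Finset.mem_insert_self, if_neg hj]
          rcases hσ with rfl | rfl
          · rw [abs_lt, abs_of_pos (by omega)]; constructor <;> omega
          · rw [abs_lt, abs_of_neg (by omega)]; constructor <;> omega
      · have hs' : y j = σ * |y j| := by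
          rcases hσ with rfl | rfl <;> rcases abs_cases (y j) with h | h <;> omega
        refine stable_minus hB i j hij _ _ (-y j) ?_ ?_ hrest ?_ ih
        · simp only [if_true]; linear_combination hs'
        · simp [hij.symm, hj]
        · simp only [if_true, if_neg hij.symm, Finset.mem_insert_self, if_neg hj]
          rcases hσ with rfl | rfl
          · rw [abs_lt, abs_of_pos (by omega)]; constructor <;> omega
          · rw [abs_lt, abs_of_neg (by omega)]; constructor <;> omega

lemma stable_diamond {d : ℕ} {B : Set (ZLat d)} (hB : Stable B) (x : ZLat d) (hx : x ∈ B)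
    (i : Fin d) (y : ZLat d) (hy : ∑ j, |y j| < |x i|) : y ∈ B := by
  classical
  obtain ⟨σ, hσ, hxi⟩ : ∃ σ : ℤ, (σ = 1 ∨ σ = -1) ∧ x i = σ * |x i| := by
    rcases abs_cases (x i) with h | h
    · exact ⟨1, Or.inl rfl, by omega⟩
    · exact ⟨-1, Or.inr rfl, by omega⟩
  have h1 := stable_zero hB x hx (Finset.univ.erase i)
  have h2 : (fun k => if k = i then σ * |x i| else 0) ∈ B := by
    convert h1 using 2 with k
    by_cases hk : k = i
    · subst hk; simp [← hxi]
    · simp [hk]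
  have hsum : ∑ j ∈ Finset.univ.erase i, |y j| + |y i| = ∑ j, |y j| :=
    Finset.sum_erase_add _ _ (Finset.mem_univ i)
  have hnn := abs_nonneg (y i)
  have h3 := stable_fill hB i |x i| σ hσ h2 y (Finset.univ.erase i) (by simp) (by omega)
  have h4 := stable_std hB i _ (y i) (by
    simp only [if_true, abs_mul]
    have : |σ| = 1 := by rcases hσ with rfl | rfl <;> simp
    rw [this, one_mul]
    exact lt_of_lt_of_le (by omega) (le_abs_self _)) h3
  convert h4 using 1
  funext k
  by_cases hk : k = i
  · subst hk; simp
  · simp [hk]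

lemma exists_card_level {α : Type*} (u : α → NNReal) (hu : Admissible u) (N : ℕ) (hN : 1 ≤ N)
    (hpos : 0 < nthLargest u N) :
    ∃ Ω : Finset α, Ω.card = N ∧ ∀ x ∈ Ω, nthLargest u N ≤ u x := by
  classical
  obtain ⟨M, hM⟩ := exists_bound u hu
  obtain ⟨s, hs0, hs1⟩ := exists_between hpos
  set F := (hu s hs0).toFinset with hF
  -- the largest value below the level among the finitely many points above `s`
  set G := F.filter (fun x => u x < nthLargest u N) with hG
  set t := max s (G.sup u) with ht
  have htlt : t < nthLargest u N := by
    rw [ht, max_lt_iff]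
    refine ⟨hs1, ?_⟩
    rw [Finset.sup_lt_iff (by simpa using hpos)]
    intro x hx
    exact (Finset.mem_filter.1 hx).2
  obtain ⟨Ω, hc, h⟩ := (lt_nthLargest_iff u M hM N hN t).1 htlt
  refine ⟨Ω, hc, fun x hx => ?_⟩
  by_contra! hlt
  have h1 := h x hx
  have hxF : x ∈ F := by
    rw [hF, Set.Finite.mem_toFinset]
    exact lt_of_le_of_lt (le_max_left _ _) h1
  have h2 : u x ≤ G.sup u := Finset.le_sup (f := u) (Finset.mem_filter.2 ⟨hxF, hlt⟩)
  exact absurd (lt_of_lt_of_le h1 (h2.trans (le_max_right _ _))) (lt_irrefl _)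

/-- Geometry of Schwarz symmetric functions: there exist L₁, L₂ : ℕ → ℕ depending only
on d with L₁(N) → ∞, such that for every Schwarz symmetric u with a_N(u) > 0,
V◇_{L₁(N)} ⊆ {u ≥ a_N(u)} and {u > a_{N+1}(u)} ⊆ V□_{L₂(N)}. -/
theorem stmt7 (d : ℕ) (hd : 2 ≤ d) :
    ∃ L₁ L₂ : ℕ → ℕ, Tendsto L₁ atTop atTop ∧
      ∀ N : ℕ, 1 ≤ N → ∀ u : ZLat d → NNReal, Admissible u → RZd d u = u →
        0 < nthLargest u N →
        VdiaI d (L₁ N) ⊆ {x | nthLargest u N ≤ u x} ∧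
        {x | nthLargest u (N + 1) < u x} ⊆ VboxI d (L₂ N) := by
  classical
  refine ⟨fun N => Nat.findGreatest (fun L => (2 * L + 1) ^ d < N) N, fun N => N, ?_, ?_⟩
  · refine tendsto_atTop.2 fun L => eventually_atTop.2 ⟨(2 * L + 1) ^ d + 1, fun N hN => ?_⟩
    have h1 : 2 * L + 1 ≤ (2 * L + 1) ^ d := Nat.le_self_pow (by omega) _
    exact Nat.le_findGreatest (by omega) (by omega)
  intro N hN u hu hfix hpos
  obtain ⟨M, hM⟩ := exists_bound u hu
  have hmono := schwarz_mono d hd u hu hfix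
  constructor
  · set B : Set (ZLat d) := {x | nthLargest u N ≤ u x} with hBdef
    have hB : Stable B := fun e he x y hl hp hx => le_trans hx (hmono e he x y hl hp)
    obtain ⟨Ω, hΩc, hΩ⟩ : ∃ Ω : Finset (ZLat d), Ω.card = N ∧ ∀ x ∈ Ω, x ∈ B :=
      exists_card_level u hu N hN hpos
    intro y hy
    set L := Nat.findGreatest (fun L => (2 * L + 1) ^ d < N) N with hL
    have hy' : ∑ j, |y j| ≤ (L : ℤ) := by
      have : (∑ i, ((y i).natAbs : ℤ)) ≤ (L : ℤ) := hy
      simpa using this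
    by_cases hL0 : L = 0
    · obtain ⟨x, hx⟩ : Ω.Nonempty := Finset.card_pos.1 (by omega)
      have h0 := stable_zero hB x (hΩ x hx) Finset.univ
      convert h0 using 1
      funext k
      have h1 : |y k| ≤ ∑ j, |y j| :=
        Finset.single_le_sum (f := fun j => |y j|) (fun j _ => abs_nonneg _) (Finset.mem_univ k)
      have h2 : |y k| ≤ 0 := by omega
      simpa using h2
    · have hPL : (2 * L + 1) ^ d < N := 
        Nat.findGreatest_of_ne_zero (P := fun L => (2 * L + 1) ^ d < N) hL.symm hL0
      obtain ⟨x, hx, i, hxi⟩ : ∃ x ∈ Ω, ∃ i, (L : ℤ) < |x i| := by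
        by_contra! hcon
        have hsub : Ω ⊆ Fintype.piFinset (fun _ : Fin d => Finset.Icc (-(L : ℤ)) L) := by
          intro x hx
          rw [Fintype.mem_piFinset]
          intro i
          rw [Finset.mem_Icc]
          exact abs_le.1 (hcon x hx i)
        have hc := Finset.card_le_card hsub
        rw [Fintype.card_piFinset, Finset.prod_const, Int.card_Icc, Finset.card_univ,
          Fintype.card_fin, show ((L : ℤ) + 1 - -(L : ℤ)).toNat = 2 * L + 1 by omega] at hc
        omega
      exact stable_diamond hB x (hΩ x hx) i y (by omega)
  · intro x hx i
    by_contra! hcon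
    have hx' : nthLargest u (N + 1) < u x := hx
    set f : Fin (N + 1) → ZLat d := fun n => Function.update x i (n : ℤ) with hf
    have hB : Stable {y | u x ≤ u y} :=
      fun e he z y hl hp hz => le_trans hz (hmono e he z y hl hp)
    have hfB : ∀ n, u x ≤ u (f n) := fun n =>
      stable_std hB i x (n : ℤ) (by
        have := n.2
        rw [abs_of_nonneg (by omega)]; omega) (le_refl (u x))
    have hinj : Function.Injective f := by
      intro m n hmn
      have := congrFun hmn i
      simp only [hf, Function.update_self] at this
      exact Fin.ext (by exact_mod_cast this)
    apply lt_irrefl (nthLargest u (N + 1))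
    rw [lt_nthLargest_iff u M hM (N + 1) (by omega)]
    refine ⟨Finset.univ.image f, ?_, ?_⟩
    · rw [Finset.card_image_of_injective _ hinj]; simp
    · intro y hy
      obtain ⟨n, -, rfl⟩ := Finset.mem_image.1 hy
      exact hx'.trans_le (hfB n)

end
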